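/- Let H be a Hopf algebra over K and let (M, μ) be a right H-Hopf module algebra, and let P_R : M → M be the map P_R(m) = ∑ m₍₀₎ · S(m₍₁₎). Then the kernel of P_R is a subalgebra of M, i.e. if P_R(m) = 0 and P_R(m') = 0 then P_R(mm') = 0. -/

import Mathlib

/-!
STATEMENT 6: For a right `H`-Hopf module algebra `(M, μ)`, the kernel of
`P_R(m) = ∑ m₍₀₎ · S(m₍₁₎)` is closed under multiplication.
-/

open TensorProduct Coalgebra HopfAlgebra LinearMap

theorem kernel_PR_subalgebra_of_rightHopfModuleAlgebra
    (K : Type*) [Field K] [CharZero K]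
    (H : Type*) [Ring H] [HopfAlgebra K H]
    (M : Type*) [NonUnitalRing M] [Module K M]
    [SMulCommClass K M M] [IsScalarTower K M M]
    -- right H-module structure on M
    (act : M ⊗[K] H →ₗ[K] M)
    (act_one : ∀ m : M, act (m ⊗ₜ[K] (1 : H)) = m)
    (act_mul : ∀ (m : M) (h h' : H),
      act (act (m ⊗ₜ[K] h) ⊗ₜ[K] h') = act (m ⊗ₜ[K] (h * h')))
    -- right H-comodule structure on M
    (δ : M →ₗ[K] M ⊗[K] H)
    (coassoc : ∀ m : M,
      (TensorProduct.assoc K M H H) ((δ.rTensor H) (δ m)) =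
        ((Coalgebra.comul (R := K) (A := H)).lTensor M) (δ m))
    (counital : ∀ m : M,
      (TensorProduct.rid K M) (((Coalgebra.counit (R := K) (A := H)).lTensor M) (δ m)) = m)
    -- Hopf module compatibility: δ(m · h) = δ(m)Δ(h)
    (hopf_compat : ∀ (m : M) (h : H),
      δ (act (m ⊗ₜ[K] h)) =
        (TensorProduct.map act (LinearMap.mul' K H))
          ((TensorProduct.tensorTensorTensorComm K M H H H)
            (δ m ⊗ₜ[K] Coalgebra.comul h)))
    -- (mm') · h = m (m' · h)
    (mul_act : ∀ (m m' : M) (h : H),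
      act ((m * m') ⊗ₜ[K] h) = m * act (m' ⊗ₜ[K] h))
    -- δ(mm') = ∑ m₍₀₎m'₍₀₎ ⊗ m₍₁₎m'₍₁₎
    (δ_mul : ∀ m m' : M,
      δ (m * m') =
        (TensorProduct.map (LinearMap.mul' K M) (LinearMap.mul' K H))
          ((TensorProduct.tensorTensorTensorComm K M H M H) (δ m ⊗ₜ[K] δ m'))) :
    -- `Ker P_R` is a subalgebra, where P_R(m) = ∑ m₍₀₎ · S(m₍₁₎)
    let PR : M →ₗ[K] M := act ∘ₗ ((antipode (R := K) (A := H)).lTensor M) ∘ₗ δ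
    ∀ m m' : M, PR m = 0 → PR m' = 0 → PR (m * m') = 0 := by
  intro PR m m' _ hm'
  have key : ∀ (a : M) (h : H) (y : M ⊗[K] H),
      act (((antipode K (A := H)).lTensor M)
        ((TensorProduct.map (LinearMap.mul' K M) (LinearMap.mul' K H))
          ((TensorProduct.tensorTensorTensorComm K M H M H) ((a ⊗ₜ[K] h) ⊗ₜ[K] y)))) =
      a * act (act (((antipode K (A := H)).lTensor M) y) ⊗ₜ[K] antipode K h) := by
    intro a h y
    induction y with
    | zero => simp
    | add y z hy hz =>
      simp only [TensorProduct.tmul_add, TensorProduct.add_tmul, map_add, mul_add, hy, hz]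
    | tmul b g =>
      simp only [TensorProduct.tensorTensorTensorComm_tmul, TensorProduct.map_tmul,
        LinearMap.mul'_apply, LinearMap.lTensor_tmul, act_mul, mul_act,
        HopfAlgebra.antipode_mul_antidistrib]
  have hy : act (((antipode K (A := H)).lTensor M) (δ m')) = 0 := hm'
  change act (((antipode K (A := H)).lTensor M) (δ (m * m'))) = 0
  rw [δ_mul]
  generalize δ m = x
  induction x with
  | zero => simp
  | add y z hy hz => simp only [TensorProduct.add_tmul, map_add, hy, hz, add_zero]
  | tmul a h => rw [key, hy]; simp
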